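/- Consider the AR(p) panel logit model: fix an integer p ≥ 1, parameters γ_1,…,γ_p ∈ ℝ and β ∈ ℝ^{d_x}, covariates x_1,…,x_T ∈ ℝ^{d_x}, fixed initial values y_0, y_{−1},…,y_{1−p} ∈ {0,1}, a scalar fixed effect A ∈ ℝ, and for y ∈ {0,1}^T (extended by the initial values) define P(y | A) := ∏_{t=1}^T exp(y_t (Σ_{r=1}^p γ_r y_{t−r} + x_tᵀβ + A)) / (1 + exp(Σ_{r=1}^p γ_r y_{t−r} + x_tᵀβ + A)). Assume T ≥ p. Then the linear subspace M := { m : {0,1}^T → ℝ : Σ_{y ∈ {0,1}^T} m(y) P(y | A) = 0 for all A ∈ ℝ } of the 2^T-dimensional space of functions {0,1}^T → ℝ satisfies dim_ℝ M ≥ 2^T − 2^p (T + 1 − p). -/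

import Mathlib

/-- Conversion of a binary outcome sequence to a real vector. -/
def toR {T : ℕ} (y : Fin T → Bool) : Fin T → ℝ := fun t => if y t then 1 else 0

/-- The lagged outcome `y_{t-r}` in an AR(p) model (0-indexed `t : Fin T`, lag
`r.val + 1` for `r : Fin p`), where `yinit i` is the fixed initial value `y_{-i}`
(so `yinit 0 = y_0, …, yinit (p-1) = y_{1-p}`). -/
def lagAR {T p : ℕ} (yinit : Fin p → ℝ) (y : Fin T → ℝ) (t : Fin T) (r : Fin p) : ℝ :=
  if h : r.val < t.val then
    y ⟨t.val - r.val - 1, lt_of_le_of_lt (le_trans (Nat.sub_le _ _) (Nat.sub_le _ _)) t.isLt⟩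
  else yinit ⟨r.val - t.val, lt_of_le_of_lt (Nat.sub_le _ _) r.isLt⟩

/-- The AR(p) panel logit probability with covariates and scalar fixed effect `A`:
`P(y|A) = ∏_t exp(y_t (Σ_r γ_r y_{t-r} + x_tᵀβ + A)) / (1 + exp(Σ_r γ_r y_{t-r} + x_tᵀβ + A))`. -/
noncomputable def arpP {T p dx : ℕ} (γ : Fin p → ℝ) (β : Fin dx → ℝ)
    (x : Fin T → Fin dx → ℝ) (yinit : Fin p → ℝ) (A : ℝ) (y : Fin T → ℝ) : ℝ :=
  ∏ t, Real.exp (y t * ((∑ r, γ r * lagAR yinit y t r) + (∑ i, x t i * β i) + A)) /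
      (1 + Real.exp ((∑ r, γ r * lagAR yinit y t r) + (∑ i, x t i * β i) + A))

/-- The space of fixed-effect-free moment functions `m : {0,1}^T → ℝ` for the AR(p)
panel logit model, i.e. those with `Σ_y m(y) P(y|A) = 0` for every `A ∈ ℝ`. -/
noncomputable def MspaceAR {T p dx : ℕ} (γ : Fin p → ℝ) (β : Fin dx → ℝ)
    (x : Fin T → Fin dx → ℝ) (yinit : Fin p → ℝ) :
    Submodule ℝ ((Fin T → Bool) → ℝ) :=
  LinearMap.ker
    (({ toFun := fun m => fun A : ℝ =>
          ∑ y : Fin T → Bool, m y * arpP γ β x yinit A (toR y)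
        map_add' := by
          intro m m'
          funext A
          simp [add_mul, Finset.sum_add_distrib]
        map_smul' := by
          intro c m
          funext A
          simp [Finset.mul_sum, mul_assoc] } :
      ((Fin T → Bool) → ℝ) →ₗ[ℝ] (ℝ → ℝ)))

/-!
Put `a = exp A`. Each per-period logit probability is `1` or `e^c a`, divided by `1 + e^c a`, where
`c` is the realised index. If the index of period `t` takes `n t` distinct values, then over the
common denominator of all outcome sequences every likelihood is a polynomial in `a` of degree at
most `∑ t, n t`, because one linear factor of period `t` cancels and the numerator contributes at
most one power of `a`. Hence the likelihoods, as functions of `A`, span a space of dimension at most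
`∑ t, n t + 1`, and the moment functions are the linear relations between them. With `p` binary lags
`n t ≤ 2 ^ min t p` (periods counted from `0`).
-/

open Polynomial Module

lemma card_image_le_of_dependsOn {ι α β : Type*} [Fintype ι] [DecidableEq ι] [Fintype α]
    [DecidableEq β] {f : (ι → α) → β} {s : Finset ι} (hf : DependsOn f (s : Set ι)) :
    (Finset.univ.image f).card ≤ Fintype.card α ^ s.card := by
  rcases isEmpty_or_nonempty β with _ | _
  · simp [Finset.eq_empty_of_isEmpty]
  obtain ⟨g, rfl⟩ := dependsOn_iff_exists_comp.mp hf
  calc _ ≤ (Finset.univ.image g).card := Finset.card_le_card <|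
        Finset.image_subset_iff.mpr fun _ _ => Finset.mem_image_of_mem g (Finset.mem_univ _)
    _ ≤ Fintype.card (s → α) := Finset.card_image_le
    _ = Fintype.card α ^ s.card := by simp

lemma sum_two_pow_min_add_one {T p : ℕ} (hT : p ≤ T) :
    (∑ t : Fin T, 2 ^ min t.val p) + 1 = 2 ^ p * (T + 1 - p) := by
  rw [Fin.sum_univ_eq_sum_range (fun t => 2 ^ min t p)]
  induction T, hT using Nat.le_induction with
  | base =>
    have hgeom : ∑ t ∈ Finset.range p, 2 ^ min t p = ∑ t ∈ Finset.range p, 2 ^ t :=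
      Finset.sum_congr rfl fun t ht => by rw [min_eq_left (Finset.mem_range.mp ht).le]
    rw [hgeom, Nat.geomSum_eq le_rfl, Nat.add_sub_cancel_left, mul_one, Nat.div_one,
      Nat.sub_add_cancel Nat.one_le_two_pow]
  | succ T hT ih =>
    rw [Finset.sum_range_succ, min_eq_right hT, add_right_comm, ih,
      Nat.sub_add_comm (hT.trans T.le_succ), mul_add _ (T + 1 - p), mul_one]

lemma finrank_degreeLT {R : Type*} [Ring R] [StrongRankCondition R] (n : ℕ) :
    finrank R (degreeLT R n) = n := by
  rw [(degreeLTEquiv R n).finrank_eq, finrank_fin_fun]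

lemma finrank_span_range_le_of_mul_eq_eval {K ι α : Type*} [Field K] {f : ι → α → K}
    {d g : α → K} {q : ι → K[X]} {n : ℕ} (hd : ∀ a, d a ≠ 0) (hq : ∀ i, (q i).natDegree ≤ n)
    (hf : ∀ i a, f i a * d a = (q i).eval (g a)) :
    finrank K (Submodule.span K (Set.range f)) ≤ n + 1 := by
  let evalDiv : K[X] →ₗ[K] α → K := LinearMap.pi fun a => (d a)⁻¹ • leval (g a)
  have : Module.Finite K (degreeLT K (n + 1)) := .equiv (degreeLTEquiv K (n + 1)).symm
  have hspan : Submodule.span K (Set.range f) ≤ (degreeLT K (n + 1)).map evalDiv := by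
    rw [Submodule.span_le, Set.range_subset_iff]
    refine fun i => ⟨q i, mem_degreeLT.mpr ?_, funext fun a => ?_⟩
    · exact degree_le_natDegree.trans_lt (by exact_mod_cast Nat.lt_succ_of_le (hq i))
    · simp [evalDiv, ← hf, mul_comm (f i a), hd a]
  calc finrank K (Submodule.span K (Set.range f))
      ≤ finrank K ((degreeLT K (n + 1)).map evalDiv) := Submodule.finrank_mono hspan
    _ ≤ finrank K (degreeLT K (n + 1)) := Submodule.finrank_map_le _ _
    _ = n + 1 := finrank_degreeLT _

/-- The logit probability of the binary outcome `b` when the latent index equals `z`. -/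
noncomputable def logitProb (z : ℝ) (b : Bool) : ℝ :=
  (if b then Real.exp z else 1) / (1 + Real.exp z)

/-- The common denominator of the probabilities `logitProb (c + A)`, `c ∈ s`, as a polynomial in
`exp A`. -/
noncomputable def logitDenominator (s : Finset ℝ) : ℝ[X] :=
  ∏ c ∈ s, (C (Real.exp c) * X + 1)

/-- The numerator of `logitProb (c + A) b` over the common denominator `logitDenominator s`, as a
polynomial in `exp A`; meaningful for `c ∈ s`. -/
noncomputable def logitNumerator (s : Finset ℝ) (c : ℝ) (b : Bool) : ℝ[X] :=
  (if b then C (Real.exp c) * X else 1) * logitDenominator (s.erase c)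

lemma natDegree_logitDenominator_le (s : Finset ℝ) : (logitDenominator s).natDegree ≤ s.card := by
  refine (natDegree_prod_le _ _).trans ?_
  simpa using Finset.sum_le_card_nsmul s _ 1 fun c _ =>
    natDegree_linear_le (a := Real.exp c) (b := (1 : ℝ))

lemma eval_logitDenominator_pos (s : Finset ℝ) (A : ℝ) :
    0 < (logitDenominator s).eval (Real.exp A) := by
  rw [logitDenominator, eval_prod]
  refine Finset.prod_pos fun c _ => ?_
  simp only [eval_add, eval_mul, eval_C, eval_X, eval_one]
  positivity

lemma natDegree_logitNumerator_le {s : Finset ℝ} {c : ℝ} (hc : c ∈ s) (b : Bool) :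
    (logitNumerator s c b).natDegree ≤ s.card := by
  have houtcome : (if b then C (Real.exp c) * X else 1 : ℝ[X]).natDegree ≤ 1 := by
    split_ifs
    · exact (natDegree_C_mul_le _ _).trans natDegree_X_le
    · simp
  calc (logitNumerator s c b).natDegree
      ≤ 1 + (s.erase c).card :=
        natDegree_mul_le_of_le houtcome (natDegree_logitDenominator_le _)
    _ = s.card := by rw [add_comm, Finset.card_erase_add_one hc]

lemma logitProb_mul_eval_logitDenominator {s : Finset ℝ} {c : ℝ} (hc : c ∈ s) (b : Bool) (A : ℝ) :
    logitProb (c + A) b * (logitDenominator s).eval (Real.exp A) =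
      (logitNumerator s c b).eval (Real.exp A) := by
  have hsplit : logitDenominator s = (C (Real.exp c) * X + 1) * logitDenominator (s.erase c) :=
    (Finset.mul_prod_erase s _ hc).symm
  have hfactor : (C (Real.exp c) * X + 1).eval (Real.exp A) = 1 + Real.exp (c + A) := by
    simp [Real.exp_add, add_comm]
  have houtcome : (if b then C (Real.exp c) * X else 1 : ℝ[X]).eval (Real.exp A) =
      if b then Real.exp (c + A) else 1 := by
    cases b <;> simp [Real.exp_add]
  have hne : 1 + Real.exp (c + A) ≠ 0 := by positivity
  rw [hsplit, logitNumerator, logitProb, eval_mul, eval_mul, hfactor, houtcome, ← mul_assoc,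
    div_mul_cancel₀ _ hne]

section Likelihood

variable {ι : Type*} [Fintype ι]

/-- The likelihood of the outcomes `y` in a binary logit model with fixed effect `A`, where the
index `u t y` of period `t` may depend on `y` arbitrarily. -/
noncomputable def logitLikelihood (u : ι → (ι → Bool) → ℝ) (y : ι → Bool) (A : ℝ) : ℝ :=
  ∏ t, logitProb (u t y + A) (y t)

variable [DecidableEq ι]

/-- The space of moment functions of the logit model with index `u`: the linear relations between
the functions `A ↦ logitLikelihood u y A`, `y` ranging over all outcomes. -/
noncomputable def logitMomentSpace (u : ι → (ι → Bool) → ℝ) : Submodule ℝ ((ι → Bool) → ℝ) :=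
  LinearMap.ker (Fintype.linearCombination ℝ (logitLikelihood u))

lemma finrank_span_range_logitLikelihood_le (u : ι → (ι → Bool) → ℝ) :
    finrank ℝ (Submodule.span ℝ (Set.range (logitLikelihood u))) ≤
      ∑ t, (Finset.univ.image (u t)).card + 1 := by
  have hmem (t : ι) (y : ι → Bool) : u t y ∈ Finset.univ.image (u t) :=
    Finset.mem_image_of_mem _ (Finset.mem_univ y)
  refine finrank_span_range_le_of_mul_eq_eval (g := Real.exp)
    (d := fun A => ∏ t, (logitDenominator (Finset.univ.image (u t))).eval (Real.exp A))
    (q := fun y => ∏ t, logitNumerator (Finset.univ.image (u t)) (u t y) (y t))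
    (fun A => (Finset.prod_pos fun t _ => eval_logitDenominator_pos _ A).ne') (fun y => ?_)
    fun y A => ?_
  · exact (natDegree_prod_le _ _).trans
      (Finset.sum_le_sum fun t _ => natDegree_logitNumerator_le (hmem t y) (y t))
  · simp only [logitLikelihood, eval_prod, ← Finset.prod_mul_distrib,
      logitProb_mul_eval_logitDenominator (hmem _ y)]

lemma two_pow_card_le_finrank_logitMomentSpace_add (u : ι → (ι → Bool) → ℝ) :
    2 ^ Fintype.card ι ≤
      finrank ℝ (logitMomentSpace u) + (∑ t, (Finset.univ.image (u t)).card + 1) := by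
  have hrank := LinearMap.finrank_range_add_finrank_ker
    (Fintype.linearCombination ℝ (logitLikelihood u))
  rw [Fintype.range_linearCombination, finrank_fintype_fun_eq_card, Fintype.card_fun,
    Fintype.card_bool, add_comm] at hrank
  exact hrank.ge.trans (Nat.add_le_add_left (finrank_span_range_logitLikelihood_le u) _)

end Likelihood

lemma card_image_le_of_dependsOn_lags {T p : ℕ} {t : Fin T} {β : Type*} [DecidableEq β]
    {f : (Fin T → Bool) → β} (hf : DependsOn f {s | s < t ∧ t.val ≤ s.val + p}) :
    (Finset.univ.image f).card ≤ 2 ^ min t.val p := by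
  let window : Finset (Fin T) := Finset.Ico ⟨t - p, (Nat.sub_le _ _).trans_lt t.isLt⟩ t
  have hwindow : {s | s < t ∧ t.val ≤ s.val + p} ⊆ (window : Set (Fin T)) := fun s hs => by
    simpa [window, Fin.le_def, and_comm] using hs
  have hcard : window.card = min t.val p := by
    rw [Fin.card_Ico]
    exact Nat.sub_sub_eq_min _ _
  simpa [hcard] using card_image_le_of_dependsOn (hf.mono hwindow)

section Autoregressive

variable {T p dx : ℕ} (γ : Fin p → ℝ) (β : Fin dx → ℝ) (x : Fin T → Fin dx → ℝ) (yinit : Fin p → ℝ)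

/-- The index `∑ r, γ r * y_{t-r} + x_tᵀβ` of the AR(p) panel logit model, without the fixed
effect. -/
noncomputable def arIndex (t : Fin T) (y : Fin T → Bool) : ℝ :=
  (∑ r, γ r * lagAR yinit (toR y) t r) + ∑ i, x t i * β i

lemma dependsOn_arIndex (t : Fin T) :
    DependsOn (arIndex γ β x yinit t) {s | s < t ∧ t.val ≤ s.val + p} := by
  intro y z hyz
  have hlag (r : Fin p) : lagAR yinit (toR y) t r = lagAR yinit (toR z) t r := by
    unfold lagAR
    split_ifs with hr
    · simp only [toR]
      rw [hyz _ ⟨Fin.lt_def.mpr (by grind), by grind⟩]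
    · rfl
  simp only [arIndex, hlag]

lemma arpP_toR (A : ℝ) (y : Fin T → Bool) :
    arpP γ β x yinit A (toR y) = logitLikelihood (arIndex γ β x yinit) y A := by
  refine Finset.prod_congr rfl fun t _ => ?_
  cases hy : y t <;> simp [logitProb, arIndex, toR, hy]

lemma mspaceAR_eq_logitMomentSpace :
    MspaceAR γ β x yinit = logitMomentSpace (arIndex γ β x yinit) := by
  refine congrArg LinearMap.ker (LinearMap.ext fun m => funext fun A => ?_)
  simp [Fintype.linearCombination_apply, arpP_toR]

end Autoregressive

theorem stmt11_general {T p : ℕ} (hT : p ≤ T) {u : Fin T → (Fin T → Bool) → ℝ}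
    (hu : ∀ t, DependsOn (u t) {s | s < t ∧ t.val ≤ s.val + p}) :
    2 ^ T - 2 ^ p * (T + 1 - p) ≤ finrank ℝ (logitMomentSpace u) := by
  have hvalues : ∑ t, (Finset.univ.image (u t)).card ≤ ∑ t : Fin T, 2 ^ min t.val p :=
    Finset.sum_le_sum fun t _ => card_image_le_of_dependsOn_lags (hu t)
  rw [← sum_two_pow_min_add_one hT, tsub_le_iff_right]
  calc 2 ^ T ≤ finrank ℝ (logitMomentSpace u) + (∑ t, (Finset.univ.image (u t)).card + 1) := by
        simpa using two_pow_card_le_finrank_logitMomentSpace_add u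
    _ ≤ _ := by gcongr

/-- In the AR(p) panel logit model with covariates and scalar fixed
effect, if `T ≥ p`, then the space of fixed-effect-free moment functions has dimension
at least `2^T - 2^p (T + 1 - p)`. -/
theorem stmt11 {T p dx : ℕ} (hp : 1 ≤ p) (hdx : 1 ≤ dx) (hT : p ≤ T)
    (γ : Fin p → ℝ) (β : Fin dx → ℝ) (x : Fin T → Fin dx → ℝ)
    (yinit : Fin p → ℝ) (hyinit : ∀ i, yinit i = 0 ∨ yinit i = 1) :
    2 ^ T - 2 ^ p * (T + 1 - p) ≤ Module.finrank ℝ (MspaceAR γ β x yinit) := by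
  rw [mspaceAR_eq_logitMomentSpace]
  exact stmt11_general hT (dependsOn_arIndex γ β x yinit)
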